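/- Let b be a prime, let alpha >= 2 be an integer, and let P be a digital net over F_b with generating matrices C_1,...,C_s in F_b^{n x m}, with dual net P^perp. Then for every z in N_0, the number of k in P^perp \ {0} with mu_alpha(k) = z equals 0 if z < mu_alpha(P^perp), and is at most (b-1)^{s*alpha} b^{(z - mu_alpha(P^perp))/alpha} (z+2)^{s*alpha - 1} if z >= mu_alpha(P^perp). -/

import Mathlib

open MeasureTheory Finset Matrix

noncomputable section

/-- The `i`-th `b`-adic digit of a natural number `k`. -/
def ndigit (b k i : ℕ) : ℕ := k / b ^ i % b

/-- The truncated digit vector `ν_n(k) ∈ F_b^n`. -/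
def digitVec (b n : ℕ) (k : ℕ) : Fin n → ZMod b := fun i => (ndigit b k i.val : ZMod b)

/-- The dual net of the digital net with generating matrices `C_1,...,C_s ∈ F_b^{n×m}`. -/
def dualNet {s n m : ℕ} (b : ℕ) (C : Fin s → Matrix (Fin n) (Fin m) (ZMod b)) :
    Set (Fin s → ℕ) :=
  {k | ∑ j, (C j)ᵀ.mulVec (digitVec b n (k j)) = 0}

/-- The list of positions (in decreasing order) of the nonzero `b`-adic digits of `k`;
position `i` corresponds to the digit of `b^i`, i.e. to the exponent `c - 1` in the paper. -/
def nzPos (b k : ℕ) : List ℕ :=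
  (((Finset.range k).filter fun i => ndigit b k i ≠ 0).sort (· ≤ ·)).reverse

/-- The Dick weight function `μ_α` (for `α = 1` the NRT weight). -/
def dickWeight (b α k : ℕ) : ℕ := (((nzPos b k).take α).map (· + 1)).sum

/-- The Dick weight of a vector of nonnegative integers. -/
def dickWeightV (b α : ℕ) {s : ℕ} (k : Fin s → ℕ) : ℕ := ∑ j, dickWeight b α (k j)

/-- `μ_α(P^⊥)`, the minimal Dick weight over nonzero elements of the dual net. -/
def minWeight {s n m : ℕ} (b α : ℕ) (C : Fin s → Matrix (Fin n) (Fin m) (ZMod b)) : ℕ :=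
  sInf (dickWeightV b α '' {k | k ∈ dualNet b C ∧ k ≠ 0})

/-- The list `κ_1 b^{c_1-1}, κ_2 b^{c_2-1}, ...` of nonzero terms of the `b`-adic
expansion of `k`, in decreasing order of the exponents. -/
def nzTerms (b k : ℕ) : List ℕ := (nzPos b k).map fun i => ndigit b k i * b ^ i

/-- `k^{(p)}`: the number `k` with its `p` most significant nonzero digits removed. -/
def trunc (b p k : ℕ) : ℕ := ((nzTerms b k).drop p).sum

/-- The term `κ_p b^{c_p-1}` (with the convention `κ_0 b^{c_0-1} = 0`). -/
def topTerm (b p k : ℕ) : ℕ := if p = 0 then 0 else (nzTerms b k).getD (p - 1) 0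

/-- `(k,l)` is of type `(p,q)`. -/
def IsType (b p q k l : ℕ) : Prop :=
  if k = l then p = 0 ∧ q = 0
  else trunc b p k = trunc b q l ∧ topTerm b p k ≠ topTerm b q l

/-- `(k,l) ∈ T_{≥ α}`: `(k,l)` is of type `(p,q)` for some `p + q ≥ α`. -/
def TGe (b α k l : ℕ) : Prop := ∃ p q : ℕ, α ≤ p + q ∧ IsType b p q k l

/-- `(k,l) ∈ T_{≥ α}` for vectors: some coordinate pair lies in `T_{≥ α}`. -/
def TGeV (b α : ℕ) {s : ℕ} (k l : Fin s → ℕ) : Prop := ∃ j, TGe b α (k j) (l j)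

/-- The `(i+1)`-st `b`-adic digit `ξ_{i+1}` of `x ∈ [0,1]` (for `x ≠ 1` the unique expansion
with infinitely many digits different from `b-1`; for `x = 1` all digits equal `b-1`). -/
def rdigit (b : ℕ) (x : ℝ) (i : ℕ) : ℕ :=
  if x = 1 then b - 1 else (⌊x * (b : ℝ) ^ (i + 1)⌋).toNat % b

/-- The `k`-th `b`-adic Walsh function. -/
def walsh (b k : ℕ) (x : ℝ) : ℂ :=
  Complex.exp (2 * (Real.pi : ℂ) * Complex.I *
    ((∑ i ∈ Finset.range k, ndigit b k i * rdigit b x i : ℕ) : ℂ) / (b : ℂ))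

/-- The multivariate `b`-adic Walsh function. -/
def walshV (b : ℕ) {s : ℕ} (k : Fin s → ℕ) (x : Fin s → ℝ) : ℂ := ∏ j, walsh b (k j) (x j)

/-- The unit cube `[0,1]^s`. -/
def cube (s : ℕ) : Set (Fin s → ℝ) := Set.univ.pi fun _ => Set.Icc 0 1

/-- The `(k,l)`-th Walsh coefficient of a kernel `K : [0,1]^s × [0,1]^s → ℝ`. -/
def walshCoeff (b : ℕ) {s : ℕ} (K : (Fin s → ℝ) → (Fin s → ℝ) → ℝ) (k l : Fin s → ℕ) : ℂ :=
  ∫ x in cube s, ∫ y in cube s,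
    (K x y : ℂ) * (starRingEnd ℂ) (walshV b k x) * walshV b l y

/-- The `b`-adic digital shift `x ⊕ y` of reals `x, y ∈ [0,1]`. -/
def dshift (b : ℕ) (x y : ℝ) : ℝ :=
  ∑' i : ℕ, (((rdigit b x i + rdigit b y i) % b : ℕ) : ℝ) / (b : ℝ) ^ (i + 1)

/-- Componentwise digital shift of vectors in `[0,1]^s`. -/
def dshiftV (b : ℕ) {s : ℕ} (x y : Fin s → ℝ) : Fin s → ℝ := fun j => dshift b (x j) (y j)

/-- The `h`-th point of the digital net with generating matrices `C_1,...,C_s ∈ F_b^{n×m}`. -/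
def netPoint {s n m : ℕ} (b : ℕ) (C : Fin s → Matrix (Fin n) (Fin m) (ZMod b)) (h : ℕ) :
    Fin s → ℝ :=
  fun j => ∑ i : Fin n, (((C j).mulVec (digitVec b m h) i).val : ℝ) / (b : ℝ) ^ (i.val + 1)

open Classical in
/-- The squared `L_2`-discrepancy of the point multiset `pts 0, ..., pts (N-1)` in `[0,1]^s`. -/
def sqL2 {s : ℕ} (N : ℕ) (pts : ℕ → (Fin s → ℝ)) : ℝ :=
  ∫ y in cube s,
    ((∑ h ∈ Finset.range N, if ∀ j, 0 ≤ pts h j ∧ pts h j < y j then (1 : ℝ) else 0) / N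
      - ∏ j, y j) ^ 2

/-- The Bernoulli polynomial `B_r` evaluated at a real `x`. -/
def bpoly (r : ℕ) (x : ℝ) : ℝ := Polynomial.aeval x (Polynomial.bernoulli r)

/-- The one-dimensional reproducing kernel `K_α` of the Sobolev space of smoothness `α`. -/
def sobKer1 (α : ℕ) (x y : ℝ) : ℝ :=
  ∑ r ∈ Finset.range (α + 1), bpoly r x * bpoly r y / ((r.factorial : ℝ)) ^ 2
    + (-1 : ℝ) ^ (α + 1) * bpoly (2 * α) |x - y| / ((2 * α).factorial : ℝ)

/-- The `s`-fold product kernel `K_{α,s}`. -/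
def sobKer (α : ℕ) {s : ℕ} (x y : Fin s → ℝ) : ℝ := ∏ j, sobKer1 α (x j) (y j)

/-- The constant `C_{τ,b}`. -/
def Ctau (b τ : ℕ) : ℝ :=
  if τ ≤ 1 then 1 / (2 * Real.sin (Real.pi / b))
  else (1 + 1 / (b : ℝ) + 1 / ((b : ℝ) * ((b : ℝ) + 1))) ^ (τ - 2)
      / (2 * Real.sin (Real.pi / b)) ^ τ

end
/-! Write `μ = μ_α(P^⊥)`. An element `k` of weight `z` is cut, in every coordinate, at its `α`-th
leading nonzero digit. The positions of the leading `sα` nonzero digits sum to `z`, which leaves at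
most `(z + 1)^(sα - 1)` choices for them and `(b - 1)^(sα)` for their values. Once these are fixed,
at most `T` lower digits are free, where `α(T + 1) ≤ z` unless `T = 0`. Digitwise subtraction keeps
the dual net stable, so two distinct elements cannot agree except in `t` low digits with `αt < μ`.
Taking `t = T - ⌊(z - μ) / α⌋` of the free positions, lowest ones in each coordinate, the remaining
`⌊(z - μ) / α⌋` free digits determine `k`. -/

section Counting

lemma card_piAntidiag_univ_le (ι : Type*) [Fintype ι] [DecidableEq ι] (n : ℕ) :
    #((univ : Finset ι).piAntidiag n) ≤ (n + 1) ^ (Fintype.card ι - 1) := by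
  have hcard : #((univ : Finset ι).piAntidiag n) = (Fintype.card ι + n - 1).choose n := by
    rw [← map_sym_eq_piAntidiag, card_map, sym_univ, card_univ, Sym.card_sym_eq_choose]
  rw [hcard]
  rcases Fintype.card ι with _ | N
  · simpa using Nat.choose_le_choose n (Nat.sub_le n 1)
  · rw [show N + 1 + n - 1 = n + N by omega, Nat.choose_symm_add]
    exact Nat.choose_add_le_add_one_pow n N

lemma exists_le_sum_eq {ι : Type*} [Fintype ι] (t : ι → ℕ) {n : ℕ} (hn : n ≤ ∑ j, t j) :
    ∃ t' ≤ t, ∑ j, t' j = n := by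
  classical
  obtain ⟨U, hU, rfl⟩ := Finset.exists_subset_card_eq
    (show n ≤ #(univ.sigma fun j => range (t j)) by simpa using hn)
  refine ⟨fun j => #{x ∈ U | x.1 = j}, fun j => ?_,
    (card_eq_sum_card_fiberwise fun x _ => mem_univ x.1).symm⟩
  rw [← card_range (t j)]
  refine card_le_card_of_injOn Sigma.snd ?_ ?_
  · rintro ⟨i, p⟩ hx
    obtain ⟨hxU, rfl⟩ := mem_filter.1 hx
    exact (mem_sigma.1 (hU hxU)).2
  · rintro ⟨i, p⟩ hx ⟨i', p'⟩ hx' rfl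
    obtain rfl : i = j := (mem_filter.1 hx).2
    obtain rfl : i' = i := (mem_filter.1 hx').2
    rfl

lemma sum_take_eq_sum_range_getD {M : Type*} [AddCommMonoid M] (L : List M) (a : ℕ) :
    (L.take a).sum = ∑ i ∈ range a, L.getD i 0 := by
  induction L generalizing a with
  | nil => simp
  | cons x L ih =>
    cases a with
    | zero => simp
    | succ a => simp [sum_range_succ', ih, add_comm]

lemma card_le_pow_sum_sub {ι : Type*} [Fintype ι] {b : ℕ} (hb : 0 < b) {F : Finset (ι → ℕ)}
    {t t' : ι → ℕ} (ht : t' ≤ t)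
    (hagree : ∀ k ∈ F, ∀ l ∈ F, ∀ j, k j / b ^ t j = l j / b ^ t j)
    (hsep : ∀ k ∈ F, ∀ l ∈ F, (∀ j, k j / b ^ t' j = l j / b ^ t' j) → k = l) :
    #F ≤ b ^ ∑ j, (t j - t' j) := by
  classical
  have hcard : #(Fintype.piFinset fun j => range (b ^ (t j - t' j))) = b ^ ∑ j, (t j - t' j) := by
    simp [prod_pow_eq_pow_sum]
  rw [← hcard]
  refine card_le_card_of_injOn (fun k j => k j / b ^ t' j % b ^ (t j - t' j)) (fun k _ => ?_)
    fun k hk l hl hkl => hsep k hk l hl fun j => ?_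
  · simpa using fun j => Nat.mod_lt _ (by positivity)
  · have hdiv (x : ℕ) : x / b ^ t' j / b ^ (t j - t' j) = x / b ^ t j := by
      rw [Nat.div_div_eq_div_mul, ← pow_add, Nat.add_sub_cancel' (ht j)]
    have hmod : k j / b ^ t' j % b ^ (t j - t' j) = l j / b ^ t' j % b ^ (t j - t' j) :=
      congrFun hkl j
    rw [← Nat.div_add_mod (k j / b ^ t' j) (b ^ (t j - t' j)), hdiv, hagree k hk l hl, ← hdiv,
      hmod, Nat.div_add_mod]

end Counting

section Digits

variable {b k l t : ℕ}

lemma ndigit_zero (b p : ℕ) : ndigit b 0 p = 0 := by simp [ndigit]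

lemma ndigit_lt (hb : 0 < b) (k p : ℕ) : ndigit b k p < b := Nat.mod_lt _ hb

lemma ndigit_div_pow (b k t p : ℕ) : ndigit b (k / b ^ t) p = ndigit b k (t + p) := by
  rw [ndigit, ndigit, Nat.div_div_eq_div_mul, pow_add]

lemma ndigit_injective (hb : 2 ≤ b) : Function.Injective (ndigit b) := by
  intro k l h
  have hmod (n : ℕ) : k % b ^ n = l % b ^ n := by
    induction n with
    | zero => simp [Nat.mod_one]
    | succ n ih =>
      rw [Nat.mod_pow_succ, Nat.mod_pow_succ, ih]
      congr 2
      exact congrFun h n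
  have hlt : ∀ x ≤ k + l, x < b ^ (k + l) := fun x hx => hx.trans_lt (Nat.lt_pow_self hb)
  simpa [Nat.mod_eq_of_lt (hlt k (by omega)), Nat.mod_eq_of_lt (hlt l (by omega))]
    using hmod (k + l)

lemma div_pow_eq_div_pow_iff (hb : 2 ≤ b) :
    k / b ^ t = l / b ^ t ↔ ∀ p ≥ t, ndigit b k p = ndigit b l p := by
  rw [← (ndigit_injective hb).eq_iff, funext_iff]
  simp only [ndigit_div_pow]
  exact ⟨fun h p hp => by simpa [Nat.add_sub_cancel' hp] using h (p - t),
    fun h p => h _ (Nat.le_add_right t p)⟩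

lemma lt_pow_iff_ndigit_eq_zero (hb : 2 ≤ b) : k < b ^ t ↔ ∀ p ≥ t, ndigit b k p = 0 := by
  rw [← Nat.div_eq_zero_iff_lt (by positivity)]
  simpa only [Nat.zero_div, ndigit_zero] using div_pow_eq_div_pow_iff (l := 0) (t := t) hb

lemma exists_lt_pow_ndigit_eq (a : Fin t → Fin b) : ∃ l < b ^ t, ∀ p : Fin t, ndigit b l p = a p :=
  ⟨finFunctionFinEquiv a, Fin.is_lt _, fun p =>
    congrArg Fin.val (congrFun (finFunctionFinEquiv.symm_apply_apply a) p)⟩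

lemma exists_ndigit_eq_sub (hb : 2 ≤ b) (h : k / b ^ t = l / b ^ t) :
    ∃ d < b ^ t, ∀ p, (ndigit b d p : ZMod b) = ndigit b k p - ndigit b l p := by
  have : NeZero b := ⟨by omega⟩
  obtain ⟨d, hd, hdig⟩ := exists_lt_pow_ndigit_eq fun p : Fin t =>
    (⟨(ndigit b k p - ndigit b l p : ZMod b).val, ZMod.val_lt _⟩ : Fin b)
  refine ⟨d, hd, fun p => ?_⟩
  rcases lt_or_ge p t with hp | hp
  · simp [hdig ⟨p, hp⟩]
  · simp [(div_pow_eq_div_pow_iff hb).1 h p hp, (lt_pow_iff_ndigit_eq_zero hb).1 hd p hp]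

end Digits

section LeadingDigits

variable {b α k l t i j p : ℕ}

/-- The exponent `c_{i+1}` of the `(i+1)`-st largest nonzero term of the `b`-adic expansion
`κ_1 b^(c_1-1) + κ_2 b^(c_2-1) + ...` of `k`, and `0` if there are at most `i` such terms. -/
def nzExponent (b k i : ℕ) : ℕ := ((nzPos b k).map (· + 1)).getD i 0

/-- The `(i+1)`-st leading nonzero digit `κ_{i+1}` of `k`, and `1` if there are at most `i` nonzero
digits, so that the value always lies in `{1, ..., b - 1}`. -/
def nzDigit (b k i : ℕ) : ℕ :=
  if nzExponent b k i = 0 then 1 else ndigit b k (nzExponent b k i - 1)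

/-- The number `c_α - 1` of digits of `k` below the `α`-th leading nonzero one (`0` if `k` has fewer
than `α` nonzero digits): these do not contribute to the Dick weight. -/
def tailLength (b α k : ℕ) : ℕ := nzExponent b k (α - 1) - 1

lemma dickWeight_eq_sum (b α k : ℕ) : dickWeight b α k = ∑ i ∈ range α, nzExponent b k i := by
  rw [dickWeight, List.map_take, sum_take_eq_sum_range_getD]
  rfl

lemma mem_nzPos (hb : 2 ≤ b) : p ∈ nzPos b k ↔ ndigit b k p ≠ 0 := by
  have hlt : ndigit b k p ≠ 0 → p < k := by
    contrapose!
    intro h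
    exact (lt_pow_iff_ndigit_eq_zero hb).1 (Nat.lt_pow_self hb) p h
  simpa [nzPos] using hlt

lemma nzExponent_of_lt (h : i < (nzPos b k).length) : nzExponent b k i = (nzPos b k)[i] + 1 := by
  simp [nzExponent, h]

lemma nzExponent_of_le (h : (nzPos b k).length ≤ i) : nzExponent b k i = 0 := by
  simp [nzExponent, h]

lemma nzExponent_lt (hij : i < j) (hi : 0 < nzExponent b k i) :
    nzExponent b k j < nzExponent b k i := by
  rcases lt_or_ge j (nzPos b k).length with hj | hj
  · have hdec : (nzPos b k).Pairwise (· > ·) :=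
      List.pairwise_reverse.2 (sortedLT_sort _).pairwise
    rw [nzExponent_of_lt hj, nzExponent_of_lt (hij.trans hj)]
    exact Nat.succ_lt_succ (List.pairwise_iff_getElem.1 hdec i j _ hj hij)
  · rwa [nzExponent_of_le hj]

lemma antitone_nzExponent (b k : ℕ) : Antitone (nzExponent b k) := by
  refine antitone_nat_of_succ_le fun i => ?_
  rcases lt_or_ge i (nzPos b k).length with hi | hi
  · exact (nzExponent_lt i.lt_succ_self (by simp [nzExponent_of_lt hi])).le
  · simp [nzExponent_of_le (hi.trans i.le_succ)]

lemma exists_nzExponent_eq_succ_iff (hb : 2 ≤ b) :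
    (∃ i, nzExponent b k i = p + 1) ↔ ndigit b k p ≠ 0 := by
  rw [← mem_nzPos hb, List.mem_iff_getElem]
  constructor
  · rintro ⟨i, hi⟩
    have hlen : i < (nzPos b k).length := by
      by_contra! h
      simp [nzExponent_of_le h] at hi
    exact ⟨i, hlen, by simpa [nzExponent_of_lt hlen] using hi⟩
  · rintro ⟨i, hi, rfl⟩
    exact ⟨i, nzExponent_of_lt hi⟩

lemma nzDigit_of_nzExponent_eq_succ (h : nzExponent b k i = p + 1) :
    nzDigit b k i = ndigit b k p := by
  simp [nzDigit, h]

lemma nzDigit_mem_Icc (hb : 2 ≤ b) (k i : ℕ) : nzDigit b k i ∈ Icc 1 (b - 1) := by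
  rcases h : nzExponent b k i with _ | p
  · rw [nzDigit, if_pos h, mem_Icc]
    omega
  · have hne := (exists_nzExponent_eq_succ_iff hb).1 ⟨i, h⟩
    have hlt := ndigit_lt (by omega : 0 < b) k p
    rw [nzDigit_of_nzExponent_eq_succ h, mem_Icc]
    omega

lemma lt_pow_iff_nzExponent_le (hb : 2 ≤ b) : k < b ^ t ↔ ∀ i, nzExponent b k i ≤ t := by
  rw [lt_pow_iff_ndigit_eq_zero hb]
  constructor
  · intro h i
    by_contra! hi
    obtain ⟨p, hp⟩ := Nat.exists_eq_succ_of_ne_zero (Nat.ne_zero_of_lt hi)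
    exact (exists_nzExponent_eq_succ_iff hb).1 ⟨i, hp⟩ (h p (by omega))
  · intro h p hp
    by_contra hne
    obtain ⟨i, hi⟩ := (exists_nzExponent_eq_succ_iff hb).2 hne
    have := h i
    omega

lemma ndigit_eq_zero_of_tailLength_le (hb : 2 ≤ b) (hα : 0 < α) (hp : tailLength b α k ≤ p)
    (hne : ∀ i < α, nzExponent b k i ≠ p + 1) : ndigit b k p = 0 := by
  by_contra h
  obtain ⟨i, hi⟩ := (exists_nzExponent_eq_succ_iff hb).2 h
  have hlt : α - 1 < i := by
    by_contra! hle
    exact hne i (by omega) hi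
  have hexp : nzExponent b k i ≤ nzExponent b k (α - 1) := antitone_nzExponent b k hlt.le
  have hexp_lt := nzExponent_lt (b := b) (k := k) hlt (by omega)
  rw [tailLength] at hp
  omega

lemma div_pow_tailLength_eq (hb : 2 ≤ b) (hα : 0 < α)
    (hexp : ∀ i < α, nzExponent b k i = nzExponent b l i)
    (hdig : ∀ i < α, nzDigit b k i = nzDigit b l i) :
    k / b ^ tailLength b α k = l / b ^ tailLength b α k := by
  rw [div_pow_eq_div_pow_iff hb]
  intro p hp
  by_cases h : ∃ i < α, nzExponent b k i = p + 1
  · obtain ⟨i, hi, hk⟩ := h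
    rw [← nzDigit_of_nzExponent_eq_succ hk, hdig i hi,
      nzDigit_of_nzExponent_eq_succ ((hexp i hi).symm.trans hk)]
  · push Not at h
    have htail : tailLength b α k = tailLength b α l := by
      rw [tailLength, tailLength, hexp _ (by omega)]
    rw [ndigit_eq_zero_of_tailLength_le hb hα hp h, ndigit_eq_zero_of_tailLength_le hb hα
      (htail ▸ hp) fun i hi => hexp i hi ▸ h i hi]

end LeadingDigits

section Weight

variable {b α : ℕ}

lemma mul_nzExponent_le_dickWeight (b α k : ℕ) :
    α * nzExponent b k (α - 1) ≤ dickWeight b α k := by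
  rw [dickWeight_eq_sum]
  simpa using card_nsmul_le_sum (range α) (nzExponent b k) (nzExponent b k (α - 1))
    fun i hi => antitone_nzExponent b k (Nat.le_sub_one_of_lt (mem_range.1 hi))

lemma dickWeight_le_mul_of_lt_pow {k t : ℕ} (hb : 2 ≤ b) (h : k < b ^ t) :
    dickWeight b α k ≤ α * t := by
  rw [dickWeight_eq_sum]
  simpa using sum_le_card_nsmul (range α) (nzExponent b k) t
    fun i _ => (lt_pow_iff_nzExponent_le hb).1 h i

lemma lt_pow_dickWeight (hb : 2 ≤ b) (hα : 0 < α) (k : ℕ) : k < b ^ dickWeight b α k := by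
  rw [lt_pow_iff_nzExponent_le hb, dickWeight_eq_sum]
  exact fun i => (antitone_nzExponent b k i.zero_le).trans
    (single_le_sum_of_canonicallyOrdered (mem_range.2 hα))

lemma dickWeightV_le_mul_sum_of_lt_pow {s : ℕ} {k t : Fin s → ℕ} (hb : 2 ≤ b)
    (h : ∀ j, k j < b ^ t j) : dickWeightV b α k ≤ α * ∑ j, t j := by
  rw [mul_sum]
  exact sum_le_sum fun j _ => dickWeight_le_mul_of_lt_pow hb (h j)

lemma finite_setOf_dickWeightV_eq (hb : 2 ≤ b) (hα : 0 < α) (s z : ℕ) :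
    {k : Fin s → ℕ | dickWeightV b α k = z}.Finite := by
  refine (Fintype.piFinset fun _ : Fin s => range (b ^ z)).finite_toSet.subset ?_
  rintro k rfl
  simp only [mem_coe, Fintype.mem_piFinset, mem_range]
  intro j
  have hle : dickWeight b α (k j) ≤ dickWeightV b α k :=
    single_le_sum_of_canonicallyOrdered (f := fun j => dickWeight b α (k j)) (mem_univ j)
  exact (lt_pow_dickWeight hb hα (k j)).trans_le (Nat.pow_le_pow_right (by omega) hle)

lemma mul_sum_tailLength_succ_le_dickWeightV {s : ℕ} (k : Fin s → ℕ)
    (hpos : 0 < ∑ j, tailLength b α (k j)) :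
    α * (∑ j, tailLength b α (k j) + 1) ≤ dickWeightV b α k := by
  have hlt : ∑ j, tailLength b α (k j) < ∑ j, nzExponent b (k j) (α - 1) := by
    obtain ⟨j, hj, hne⟩ := exists_ne_zero_of_sum_ne_zero hpos.ne'
    refine sum_lt_sum (fun i _ => Nat.sub_le _ _) ⟨j, hj, ?_⟩
    rw [tailLength] at hne ⊢
    omega
  calc α * (∑ j, tailLength b α (k j) + 1)
      ≤ α * ∑ j, nzExponent b (k j) (α - 1) := Nat.mul_le_mul_left α hlt
    _ = ∑ j, α * nzExponent b (k j) (α - 1) := mul_sum _ _ _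
    _ ≤ dickWeightV b α k := sum_le_sum fun j _ => mul_nzExponent_le_dickWeight b α (k j)

end Weight

section DualNet

variable {b α s n m z : ℕ} {C : Fin s → Matrix (Fin n) (Fin m) (ZMod b)}

lemma exists_mem_dualNet_lt_pow (hb : 2 ≤ b) {k l t : Fin s → ℕ} (hk : k ∈ dualNet b C)
    (hl : l ∈ dualNet b C) (hne : k ≠ l) (hagree : ∀ j, k j / b ^ t j = l j / b ^ t j) :
    ∃ d ∈ dualNet b C, d ≠ 0 ∧ ∀ j, d j < b ^ t j := by
  choose d hlt hdig using fun j => exists_ndigit_eq_sub hb (hagree j)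
  refine ⟨d, ?_, ?_, hlt⟩
  · have hvec (j) : digitVec b n (d j) = digitVec b n (k j) - digitVec b n (l j) :=
      funext fun i => hdig j i
    rw [dualNet, Set.mem_ofPred_eq] at hk hl ⊢
    simp only [hvec, mulVec_sub, sum_sub_distrib, hk, hl, sub_zero]
  · rintro rfl
    refine hne (funext fun j => ndigit_injective hb (funext fun p => ?_))
    have hcast : (ndigit b (k j) p : ZMod b) = ndigit b (l j) p := by
      simpa [ndigit_zero, eq_comm, sub_eq_zero] using hdig j p
    rw [ZMod.natCast_eq_natCast_iff'] at hcast
    simpa [ndigit] using hcast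

lemma sum_pos_and_minWeight_le_mul_sum (hb : 2 ≤ b) (α : ℕ) {k l t : Fin s → ℕ}
    (hk : k ∈ dualNet b C) (hl : l ∈ dualNet b C) (hne : k ≠ l)
    (hagree : ∀ j, k j / b ^ t j = l j / b ^ t j) :
    0 < ∑ j, t j ∧ minWeight b α C ≤ α * ∑ j, t j := by
  obtain ⟨d, hd, hd0, hlt⟩ := exists_mem_dualNet_lt_pow hb hk hl hne hagree
  refine ⟨Nat.pos_of_ne_zero fun ht => hd0 (funext fun j => ?_), ?_⟩
  · simpa [sum_eq_zero_iff.1 ht j (mem_univ j)] using hlt j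
  · have hmin : minWeight b α C ≤ dickWeightV b α d := Nat.sInf_le ⟨d, ⟨hd, hd0⟩, rfl⟩
    exact hmin.trans (dickWeightV_le_mul_sum_of_lt_pow hb hlt)

lemma setOf_dickWeightV_eq_of_lt_minWeight (hz : z < minWeight b α C) :
    {k : Fin s → ℕ | k ∈ dualNet b C ∧ k ≠ 0 ∧ dickWeightV b α k = z} = ∅ :=
  Set.eq_empty_of_forall_notMem fun k ⟨hk, hk0, hkz⟩ =>
    Nat.notMem_of_lt_sInf hz ⟨k, ⟨hk, hk0⟩, hkz⟩

end DualNet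

section LeadingData

variable {b α s n m z : ℕ} {C : Fin s → Matrix (Fin n) (Fin m) (ZMod b)}

/-- The exponents `c_1 > ... > c_α` of all coordinates of `k`, with the padding of `nzExponent`;
together with `leadingDigits` this is what is fixed before counting the lower digits. -/
def leadingExponents (b α : ℕ) {s : ℕ} (k : Fin s → ℕ) : Fin s × Fin α → ℕ :=
  fun x => nzExponent b (k x.1) x.2

/-- The leading nonzero digits `κ_1, ..., κ_α` of all coordinates of `k`, with the padding of
`nzDigit`. -/
def leadingDigits (b α : ℕ) {s : ℕ} (k : Fin s → ℕ) : Fin s × Fin α → ℕ :=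
  fun x => nzDigit b (k x.1) x.2

lemma leadingExponents_mem_piAntidiag (b α : ℕ) (k : Fin s → ℕ) :
    leadingExponents b α k ∈ univ.piAntidiag (dickWeightV b α k) := by
  simp [leadingExponents, dickWeightV, dickWeight_eq_sum, Fintype.sum_prod_type, sum_range]

lemma leadingDigits_mem_piFinset (hb : 2 ≤ b) (α : ℕ) (k : Fin s → ℕ) :
    leadingDigits b α k ∈ Fintype.piFinset fun _ => Icc 1 (b - 1) :=
  Fintype.mem_piFinset.2 fun x => nzDigit_mem_Icc hb (k x.1) x.2

lemma div_pow_tailLength_eq_of_leading_eq (hb : 2 ≤ b) (hα : 0 < α) {k l : Fin s → ℕ}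
    (hexp : leadingExponents b α k = leadingExponents b α l)
    (hdig : leadingDigits b α k = leadingDigits b α l) (j : Fin s) :
    k j / b ^ tailLength b α (k j) = l j / b ^ tailLength b α (k j) :=
  div_pow_tailLength_eq hb hα (fun i hi => congrFun hexp (j, ⟨i, hi⟩))
    fun i hi => congrFun hdig (j, ⟨i, hi⟩)

lemma card_le_of_leading_eq (hb : 2 ≤ b) (hα : 0 < α) {F : Finset (Fin s → ℕ)}
    (hF : ∀ k ∈ F, k ∈ dualNet b C ∧ dickWeightV b α k = z)
    (hexp : ∀ k ∈ F, ∀ l ∈ F, leadingExponents b α k = leadingExponents b α l)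
    (hdig : ∀ k ∈ F, ∀ l ∈ F, leadingDigits b α k = leadingDigits b α l) :
    #F ≤ b ^ ((z - minWeight b α C) / α) := by
  rcases F.eq_empty_or_nonempty with rfl | ⟨k₀, hk₀⟩
  · simp
  generalize he : (z - minWeight b α C) / α = e
  set t : Fin s → ℕ := fun j => tailLength b α (k₀ j)
  set T := ∑ j, t j with hT
  -- For `T ≤ e` this gives `t' = 0`, and full agreement separates elements trivially.
  obtain ⟨t', ht', hsum⟩ := exists_le_sum_eq t (Nat.sub_le T e)
  have hagree (k) (hk : k ∈ F) (j) : k₀ j / b ^ t j = k j / b ^ t j :=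
    div_pow_tailLength_eq_of_leading_eq hb hα (hexp k₀ hk₀ k hk) (hdig k₀ hk₀ k hk) j
  have hsep : ∀ k ∈ F, ∀ l ∈ F, (∀ j, k j / b ^ t' j = l j / b ^ t' j) → k = l := by
    intro k hk l hl hkl
    by_contra hne
    obtain ⟨hpos, hmin⟩ := sum_pos_and_minWeight_le_mul_sum hb α (hF k hk).1 (hF l hl).1 hne hkl
    rw [hsum] at hpos hmin
    have hT_pos : 0 < T := by omega
    have hweight : α * (T + 1) ≤ z :=
      (mul_sum_tailLength_succ_le_dickWeightV k₀ hT_pos).trans_eq (hF k₀ hk₀).2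
    have hsplit : α * (T + 1) = α * (T - e) + α * (e + 1) := by
      rw [← mul_add]
      congr 1
      omega
    have hdiv : z - minWeight b α C < α * (e + 1) := he ▸ Nat.lt_mul_div_succ _ hα
    omega
  have hfree : ∑ j, (t j - t' j) ≤ e := by
    rw [sum_tsub_distrib _ fun j _ => ht' j, hsum, ← hT]
    omega
  exact (card_le_pow_sum_sub (by omega) ht'
    (fun k hk l hl j => (hagree k hk j).symm.trans (hagree l hl j)) hsep).trans
    (Nat.pow_le_pow_right (by omega) hfree)

lemma card_le_of_dickWeightV_eq (hb : 2 ≤ b) (hα : 0 < α) {F : Finset (Fin s → ℕ)}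
    (hF : ∀ k ∈ F, k ∈ dualNet b C ∧ dickWeightV b α k = z) :
    #F ≤ (b - 1) ^ (s * α) * b ^ ((z - minWeight b α C) / α) * (z + 1) ^ (s * α - 1) := by
  let lead (k : Fin s → ℕ) := (leadingExponents b α k, leadingDigits b α k)
  have hfiber : #F ≤ b ^ ((z - minWeight b α C) / α) * #(F.image lead) := by
    refine card_le_mul_card_image F _ fun a _ => ?_
    have hlead {k l} (hk : k ∈ {k ∈ F | lead k = a}) (hl : l ∈ {k ∈ F | lead k = a}) :
        lead k = lead l := (mem_filter.1 hk).2.trans (mem_filter.1 hl).2.symm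
    exact card_le_of_leading_eq hb hα (fun k hk => hF k (mem_filter.1 hk).1)
      (fun k hk l hl => congrArg Prod.fst (hlead hk hl))
      fun k hk l hl => congrArg Prod.snd (hlead hk hl)
  have himage : F.image lead ⊆
      univ.piAntidiag z ×ˢ Fintype.piFinset fun _ => Icc 1 (b - 1) := by
    refine image_subset_iff.2 fun k hk => mem_product.2 ⟨?_, leadingDigits_mem_piFinset hb α k⟩
    exact (hF k hk).2 ▸ leadingExponents_mem_piAntidiag b α k
  have hlead_card : #(F.image lead) ≤ (z + 1) ^ (s * α - 1) * (b - 1) ^ (s * α) := by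
    have hexp := card_piAntidiag_univ_le (Fin s × Fin α) z
    have hprod := card_le_card himage
    simp only [card_product, Fintype.card_piFinset, prod_const, card_univ, Fintype.card_prod,
      Fintype.card_fin, Nat.card_Icc, Nat.add_sub_cancel] at hexp hprod
    exact hprod.trans (Nat.mul_le_mul_right _ hexp)
  calc #F ≤ b ^ ((z - minWeight b α C) / α) * ((z + 1) ^ (s * α - 1) * (b - 1) ^ (s * α)) :=
        hfiber.trans (Nat.mul_le_mul_left _ hlead_card)
    _ = _ := by ring

end LeadingData

lemma pow_natDiv_le_rpow_div {x : ℝ} (hx : 1 ≤ x) (m n : ℕ) :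
    x ^ (m / n) ≤ x ^ ((m : ℝ) / n) := by
  rw [← Real.rpow_natCast]
  exact Real.rpow_le_rpow_of_exponent_le hx Nat.cast_div_le

theorem stmt_4_general {b : ℕ} (hb : 2 ≤ b) {α : ℕ} (hα : 0 < α) {s n m : ℕ}
    (C : Fin s → Matrix (Fin n) (Fin m) (ZMod b)) (z : ℕ) :
    (z < minWeight b α C →
      {k : Fin s → ℕ | k ∈ dualNet b C ∧ k ≠ 0 ∧ dickWeightV b α k = z}.ncard = 0) ∧
    (minWeight b α C ≤ z →
      {k : Fin s → ℕ | k ∈ dualNet b C ∧ k ≠ 0 ∧ dickWeightV b α k = z}.Finite ∧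
      ({k : Fin s → ℕ | k ∈ dualNet b C ∧ k ≠ 0 ∧ dickWeightV b α k = z}.ncard : ℝ)
        ≤ ((b : ℝ) - 1) ^ (s * α)
            * (b : ℝ) ^ (((z : ℝ) - (minWeight b α C : ℝ)) / (α : ℝ))
            * ((z : ℝ) + 2) ^ (s * α - 1)) := by
  refine ⟨fun hz => by rw [setOf_dickWeightV_eq_of_lt_minWeight hz, Set.ncard_empty], fun hz => ?_⟩
  have hfin : {k : Fin s → ℕ | k ∈ dualNet b C ∧ k ≠ 0 ∧ dickWeightV b α k = z}.Finite :=
    (finite_setOf_dickWeightV_eq hb hα s z).subset fun k hk => hk.2.2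
  have hb1 : (1 : ℝ) ≤ b := by exact_mod_cast (by omega : 1 ≤ b)
  have hcard := Nat.cast_le (α := ℝ).2 (card_le_of_dickWeightV_eq hb hα (F := hfin.toFinset)
    fun k hk => have hk' := hfin.mem_toFinset.1 hk; ⟨hk'.1, hk'.2.2⟩)
  have hpow := pow_natDiv_le_rpow_div hb1 (z - minWeight b α C) α
  rw [Nat.cast_sub hz] at hpow
  push_cast [Nat.cast_sub (by omega : 1 ≤ b)] at hcard
  have : (0 : ℝ) ≤ b - 1 := sub_nonneg.2 hb1
  refine ⟨hfin, ?_⟩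
  rw [Set.ncard_eq_toFinset_card _ hfin]
  refine hcard.trans ?_
  gcongr
  norm_num

/-- Lemma 3.3(1): counting dual-net elements of given Dick weight `μ_α`, `α ≥ 2`. -/
theorem stmt_4 (b : ℕ) (hb : b.Prime) (α : ℕ) (hα : 2 ≤ α) (s n m : ℕ)
    (C : Fin s → Matrix (Fin n) (Fin m) (ZMod b)) (z : ℕ) :
    (z < minWeight b α C →
      {k : Fin s → ℕ | k ∈ dualNet b C ∧ k ≠ 0 ∧ dickWeightV b α k = z}.ncard = 0) ∧
    (minWeight b α C ≤ z →
      {k : Fin s → ℕ | k ∈ dualNet b C ∧ k ≠ 0 ∧ dickWeightV b α k = z}.Finite ∧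
      ({k : Fin s → ℕ | k ∈ dualNet b C ∧ k ≠ 0 ∧ dickWeightV b α k = z}.ncard : ℝ)
        ≤ ((b : ℝ) - 1) ^ (s * α)
            * (b : ℝ) ^ (((z : ℝ) - (minWeight b α C : ℝ)) / (α : ℝ))
            * ((z : ℝ) + 2) ^ (s * α - 1)) := by
  exact stmt_4_general hb.two_le (by omega) C z
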